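/- Let Σ = (X,U,f,Y,h) and Σ̂ = (X̂,Û,f̂,Ŷ,ĥ) be transition systems (with Ŷ ⊆ Y and Y a normed vector space), and suppose V is a simulation function from Σ̂ to Σ with associated functions α, σ ∈ K∞, ρ_ext ∈ K∞ ∪ {0} and constant ε ≥ 0. Then there exist a constant φ ≥ 0, a function γ_ext ∈ K∞ ∪ {0}, and a function λ ∈ K∞ with λ(s) < s for all s > 0, such that: for every x ∈ X, x̂ ∈ X̂ and û ∈ Û there exists u ∈ U so that for every x_d ∈ f(x,u) there exists x̂_d ∈ f̂(x̂,û) satisfying α(‖h(x_d) − ĥ(x̂_d)‖) ≤ V(x_d, x̂_d) ≤ max{ λ(V(x,x̂)), γ_ext(‖û‖) + φ }. -/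

import Mathlib

open Filter

/-- A class-K function: continuous, strictly increasing on `[0,∞)`, and vanishing at `0`. -/
def ClassK (f : ℝ → ℝ) : Prop :=
  ContinuousOn f (Set.Ici 0) ∧ StrictMonoOn f (Set.Ici 0) ∧ f 0 = 0

/-- A class-K∞ function: a class-K function that is unbounded. -/
def ClassKInf (f : ℝ → ℝ) : Prop :=
  ClassK f ∧ Tendsto f atTop atTop

/-!
Put `τ = σ / 2`, `v = V x xh` and `r = ρext ‖uh‖ + ε`; the successor value is at most
`v - 2 τ v + r`. If `r ≤ τ v`, this is at most `v - τ v`; otherwise `v ≤ τ⁻¹ r`, and it is at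
most `η r` with `η = τ⁻¹ + id`.

The map `v ↦ v - τ v` need not be increasing, but `lam = (id + τ)⁻¹` is a class-K∞ function
above it: `lam v ≤ v` and `v = lam v + τ (lam v) ≤ lam v + τ v`. Finally
`η (a + b) ≤ η (2 a) + η (2 b)` separates the input from the constant `ε`.
-/

namespace ClassK

open Set

variable {f g : ℝ → ℝ} {s t : ℝ}

theorem continuousOn (hf : ClassK f) : ContinuousOn f (Ici 0) :=
  hf.1

theorem strictMonoOn (hf : ClassK f) : StrictMonoOn f (Ici 0) :=
  hf.2.1

theorem map_zero (hf : ClassK f) : f 0 = 0 :=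
  hf.2.2

theorem map_le_map (hf : ClassK f) (hs : 0 ≤ s) (hst : s ≤ t) : f s ≤ f t :=
  hf.strictMonoOn.monotoneOn hs (hs.trans hst) hst

theorem map_nonneg (hf : ClassK f) (hs : 0 ≤ s) : 0 ≤ f s :=
  hf.map_zero.ge.trans (hf.map_le_map le_rfl hs)

theorem map_pos (hf : ClassK f) (hs : 0 < s) : 0 < f s :=
  hf.map_zero.ge.trans_lt (hf.strictMonoOn self_mem_Ici hs.le hs)

theorem mapsTo (hf : ClassK f) : MapsTo f (Ici 0) (Ici 0) :=
  fun _ hs => hf.map_nonneg hs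

theorem comp (hf : ClassK f) (hg : ClassK g) : ClassK fun s => f (g s) :=
  ⟨hf.continuousOn.comp hg.continuousOn hg.mapsTo,
    hf.strictMonoOn.comp hg.strictMonoOn hg.mapsTo, by simp only [hg.map_zero, hf.map_zero]⟩

theorem add (hf : ClassK f) (hg : ClassK g) : ClassK fun s => f s + g s :=
  ⟨hf.continuousOn.add hg.continuousOn, hf.strictMonoOn.add hg.strictMonoOn,
    by simp only [hf.map_zero, hg.map_zero, add_zero]⟩

theorem const_mul {c : ℝ} (hf : ClassK f) (hc : 0 < c) : ClassK fun s => c * f s :=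
  ⟨continuousOn_const.mul hf.continuousOn,
    fun _ ha _ hb hab => mul_lt_mul_of_pos_left (hf.strictMonoOn ha hb hab) hc,
    by simp only [hf.map_zero, mul_zero]⟩

theorem map_add_le (hf : ClassK f) (hs : 0 ≤ s) (ht : 0 ≤ t) :
    f (s + t) ≤ f (2 * s) + f (2 * t) := by
  rcases le_total s t with hst | hts
  · calc f (s + t) ≤ f (2 * t) := hf.map_le_map (by positivity) (by linarith)
      _ ≤ f (2 * s) + f (2 * t) := le_add_of_nonneg_left (hf.map_nonneg (by positivity))
  · calc f (s + t) ≤ f (2 * s) := hf.map_le_map (by positivity) (by linarith)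
      _ ≤ f (2 * s) + f (2 * t) := le_add_of_nonneg_right (hf.map_nonneg (by positivity))

end ClassK

theorem classKInf_id : ClassKInf fun s => s :=
  ⟨⟨continuousOn_id, strictMonoOn_id, rfl⟩, tendsto_id⟩

namespace ClassKInf

open Set

variable {f g : ℝ → ℝ}

theorem classK (hf : ClassKInf f) : ClassK f :=
  hf.1

theorem tendsto_atTop (hf : ClassKInf f) : Tendsto f atTop atTop :=
  hf.2

theorem comp (hf : ClassKInf f) (hg : ClassKInf g) : ClassKInf fun s => f (g s) :=
  ⟨hf.classK.comp hg.classK, hf.tendsto_atTop.comp hg.tendsto_atTop⟩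

theorem add_classK (hf : ClassKInf f) (hg : ClassK g) : ClassKInf fun s => f s + g s :=
  ⟨hf.classK.add hg, tendsto_atTop_mono' atTop
    ((eventually_ge_atTop 0).mono fun _ hs => le_add_of_nonneg_right (hg.map_nonneg hs))
    hf.tendsto_atTop⟩

theorem const_mul {c : ℝ} (hf : ClassKInf f) (hc : 0 < c) : ClassKInf fun s => c * f s :=
  ⟨hf.classK.const_mul hc, hf.tendsto_atTop.const_mul_atTop hc⟩

theorem bijOn (hf : ClassKInf f) : BijOn f (Ici 0) (Ici 0) := by
  refine ⟨hf.classK.mapsTo, hf.classK.strictMonoOn.injOn, ?_⟩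
  simpa only [SurjOn, hf.classK.map_zero] using
    intermediate_value_Ici hf.classK.continuousOn hf.tendsto_atTop

theorem exists_invOn (hf : ClassKInf f) : ∃ g, ClassKInf g ∧ InvOn g f (Ici 0) (Ici 0) := by
  let e : Ici (0 : ℝ) ≃o Ici (0 : ℝ) :=
    { hf.bijOn.equiv f with map_rel_iff' := fun {a b} => hf.classK.strictMonoOn.le_iff_le a.2 b.2 }
  let g : ℝ → ℝ := IciExtend fun s => (e.symm s : ℝ)
  have g_coe (s : Ici (0 : ℝ)) : g s = e.symm s := IciExtend_coe _ s
  have g_invOn : InvOn g f (Ici 0) (Ici 0) :=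
    ⟨fun s hs => (g_coe (e ⟨s, hs⟩)).trans (congrArg Subtype.val (e.symm_apply_apply ⟨s, hs⟩)),
      fun s hs => (congrArg f (g_coe ⟨s, hs⟩)).trans
        (congrArg Subtype.val (e.apply_symm_apply ⟨s, hs⟩))⟩
  have g_cont : ContinuousOn g (Ici 0) := by
    rw [continuousOn_iff_continuous_domRestrict]
    exact (continuous_subtype_val.comp e.symm.continuous).congr fun s => (g_coe s).symm
  have g_zero : g 0 = 0 := by
    simpa only [hf.classK.map_zero] using g_invOn.1 self_mem_Ici
  have g_tendsto : Tendsto g atTop atTop := by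
    rw [← tendsto_comp_val_Ici_atTop (a := 0)]
    exact (tendsto_Ici_atTop.1 e.symm.tendsto_atTop).congr fun s => (g_coe s).symm
  exact ⟨g, ⟨⟨g_cont, e.symm.strictMono.strictMonoOn_IciExtend, g_zero⟩, g_tendsto⟩, g_invOn⟩

end ClassKInf

theorem ClassK.exists_classKInf_sub_le_lt_self {σ : ℝ → ℝ} (hσ : ClassK σ) :
    ∃ lam, ClassKInf lam ∧ (∀ s > 0, lam s < s) ∧ ∀ s, 0 ≤ s → s - σ s ≤ lam s := by
  obtain ⟨lam, hlam, -, lam_right_inv⟩ := (classKInf_id.add_classK hσ).exists_invOn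
  have lam_add (s : ℝ) (hs : 0 ≤ s) : lam s + σ (lam s) = s := lam_right_inv hs
  have lam_lt (s : ℝ) (hs : 0 < s) : lam s < s := by
    linarith [lam_add s hs.le, hσ.map_pos (hlam.classK.map_pos hs)]
  refine ⟨lam, hlam, lam_lt, fun s hs => ?_⟩
  have lam_le : lam s ≤ s := by
    linarith [lam_add s hs, hσ.map_nonneg (hlam.classK.map_nonneg hs)]
  linarith [lam_add s hs, hσ.map_le_map (hlam.classK.map_nonneg hs) lam_le]

theorem ClassKInf.exists_sub_add_le_max {σ : ℝ → ℝ} (hσ : ClassKInf σ) :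
    ∃ lam η, ClassKInf lam ∧ (∀ s > 0, lam s < s) ∧ ClassKInf η ∧
      ∀ v r, 0 ≤ v → v - σ v + r ≤ max (lam v) (η r) := by
  have hσ' : ClassKInf fun s => 1 / 2 * σ s := hσ.const_mul one_half_pos
  obtain ⟨lam, hlam, lam_lt, le_lam⟩ := hσ'.classK.exists_classKInf_sub_le_lt_self
  obtain ⟨κ, hκ, κ_left_inv, -⟩ := hσ'.exists_invOn
  refine ⟨lam, fun r => κ r + r, hlam, lam_lt, hκ.add_classK classKInf_id.classK,
    fun v r hv => ?_⟩
  rcases le_total r (1 / 2 * σ v) with hrσ | hσr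
  · exact le_max_of_le_left (by linarith [le_lam v hv])
  · have v_le : v ≤ κ r := by
      calc v = κ (1 / 2 * σ v) := (κ_left_inv hv).symm
        _ ≤ κ r := hκ.classK.map_le_map (hσ'.classK.map_nonneg hv) hσr
    exact le_max_of_le_right (by linarith [hσ.classK.map_nonneg hv])

theorem stmt_1_general
    {X U Xh EU EY : Type*} [SeminormedAddCommGroup EU] [SeminormedAddCommGroup EY]
    (Uh : Set EU) (f : X → U → Set X) (fh : Xh → EU → Set Xh) (h : X → EY) (hh : Xh → EY)
    (V : X → Xh → ℝ) (hVnonneg : ∀ x xh, 0 ≤ V x xh)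
    (α σ ρext : ℝ → ℝ) (ε : ℝ) (hσ : ClassKInf σ)
    (hρ : ClassKInf ρext ∨ ρext = fun _ => 0) (hε : 0 ≤ ε)
    (hV1 : ∀ x xh, α ‖h x - hh xh‖ ≤ V x xh)
    (hV2 : ∀ x xh, ∀ uh ∈ Uh, ∃ u : U, ∀ xd ∈ f x u, ∃ xhd ∈ fh xh uh,
      V xd xhd - V x xh ≤ -σ (V x xh) + ρext ‖uh‖ + ε) :
    ∃ φ : ℝ, 0 ≤ φ ∧ ∃ γext : ℝ → ℝ, (ClassKInf γext ∨ γext = fun _ => 0) ∧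
      ∃ lam : ℝ → ℝ, ClassKInf lam ∧ (∀ s > (0 : ℝ), lam s < s) ∧
        ∀ x xh, ∀ uh ∈ Uh, ∃ u : U, ∀ xd ∈ f x u, ∃ xhd ∈ fh xh uh,
          α ‖h xd - hh xhd‖ ≤ V xd xhd ∧
          V xd xhd ≤ max (lam (V x xh)) (γext ‖uh‖ + φ) := by
  obtain ⟨lam, η, hlam, lam_lt, hη, le_max⟩ := hσ.exists_sub_add_le_max
  have ρext_nonneg {s : ℝ} (hs : 0 ≤ s) : 0 ≤ ρext s :=
    hρ.elim (fun hρ => hρ.classK.map_nonneg hs) fun hρ => (congrFun hρ s).ge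
  have hγ : ClassKInf (fun s => η (2 * ρext s)) ∨ (fun s => η (2 * ρext s)) = fun _ => 0 :=
    hρ.imp (fun hρ => hη.comp (hρ.const_mul two_pos)) fun hρ => by
      simp only [hρ, mul_zero, hη.classK.map_zero]
  refine ⟨η (2 * ε), hη.classK.map_nonneg (by positivity), fun s => η (2 * ρext s), hγ,
    lam, hlam, lam_lt, fun x xh uh huh => ?_⟩
  obtain ⟨u, hu⟩ := hV2 x xh uh huh
  refine ⟨u, fun xd hxd => ?_⟩
  obtain ⟨xhd, hxhd, hdecay⟩ := hu xd hxd
  have hr : 0 ≤ ρext ‖uh‖ := ρext_nonneg (norm_nonneg uh)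
  refine ⟨xhd, hxhd, hV1 xd xhd, ?_⟩
  calc V xd xhd ≤ V x xh - σ (V x xh) + (ρext ‖uh‖ + ε) := by linarith
    _ ≤ max (lam (V x xh)) (η (ρext ‖uh‖ + ε)) := le_max _ _ (hVnonneg x xh)
    _ ≤ max (lam (V x xh)) (η (2 * ρext ‖uh‖) + η (2 * ε)) :=
      max_le_max_left _ (hη.classK.map_add_le hr hε)

/-- Theorem 1 of the paper: if `V` is a simulation function from `Σ̂ = (X̂,Û,f̂,Ŷ,ĥ)` to
`Σ = (X,U,f,Y,h)`, then there exist `φ ≥ 0`, `γ_ext ∈ K∞ ∪ {0}` and `λ ∈ K∞` with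
`λ(s) < s` for `s > 0`, such that for all `x, x̂, û` there is `u` so that for every
`x_d ∈ f(x,u)` there exists `x̂_d ∈ f̂(x̂,û)` with
`α(‖h(x_d) − ĥ(x̂_d)‖) ≤ V(x_d,x̂_d) ≤ max {λ(V(x,x̂)), γ_ext(‖û‖) + φ}`. -/
theorem stmt_1
    {X U Xh : Type*} {EU EY : Type*}
    [NormedAddCommGroup EU] [NormedAddCommGroup EY]
    [TopologicalSpace X] [TopologicalSpace Xh]
    (Uh : Set EU)                      -- the input set Û of the abstraction
    (f : X → U → Set X) (fh : Xh → EU → Set Xh)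
    (h : X → EY) (hh : Xh → EY)
    (V : X → Xh → ℝ)
    (hVcont : Continuous fun p : X × Xh => V p.1 p.2)
    (hVnonneg : ∀ x xh, 0 ≤ V x xh)
    (α σ ρext : ℝ → ℝ) (ε : ℝ)
    (hα : ClassKInf α) (hσ : ClassKInf σ)
    (hρ : ClassKInf ρext ∨ ρext = fun _ => 0) (hε : 0 ≤ ε)
    -- simulation function condition (i)
    (hV1 : ∀ x xh, α ‖h x - hh xh‖ ≤ V x xh)
    -- simulation function condition (ii)
    (hV2 : ∀ x xh, ∀ uh ∈ Uh, ∃ u : U, ∀ xd ∈ f x u, ∃ xhd ∈ fh xh uh,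
      V xd xhd - V x xh ≤ -σ (V x xh) + ρext ‖uh‖ + ε) :
    ∃ φ : ℝ, 0 ≤ φ ∧ ∃ γext : ℝ → ℝ, (ClassKInf γext ∨ γext = fun _ => 0) ∧
      ∃ lam : ℝ → ℝ, ClassKInf lam ∧ (∀ s > (0:ℝ), lam s < s) ∧
        ∀ x xh, ∀ uh ∈ Uh, ∃ u : U, ∀ xd ∈ f x u, ∃ xhd ∈ fh xh uh,
          α ‖h xd - hh xhd‖ ≤ V xd xhd ∧
          V xd xhd ≤ max (lam (V x xh)) (γext ‖uh‖ + φ) :=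
  stmt_1_general Uh f fh h hh V hVnonneg α σ ρext ε hσ hρ hε hV1 hV2
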